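/- For every context-free grammar G in Chomsky normal form with T nonterminals and every word w in the language L(G), the word w admits a compact G-decomposition; that is, w can be written as a concatenation w = s₁u₁s₂u₂⋯s_k u_k s_{k+1} of words s₁,…,s_{k+1}, u₁,…,u_k over Σ such that (1) for every natural number ℓ, the word s₁u₁^ℓ s₂u₂^ℓ⋯s_k u_k^ℓ s_{k+1} belongs to L(G), and (2) Σ_{i=1}^{k+1}|s_i| ≤ 2^T and k ≤ 2^{T+1} − 2. -/

import Mathlib

namespace Levenshtein

/-- A cost structure for Levenshtein edit distance (as in Mathlib of December 2024). -/
structure Cost (α β δ : Type*) where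
  /-- Cost to delete an element from a list. -/
  delete : α → δ
  /-- Cost to insert an element into a list. -/
  insert : β → δ
  /-- Cost to substitute one element for another in a list. -/
  substitute : α → β → δ

/-- The default cost structure, for which all operations cost `1`
(as in Mathlib of December 2024). -/
def defaultCost {α : Type*} [DecidableEq α] : Cost α α ℕ where
  delete _ := 1
  insert _ := 1
  substitute a b := if a = b then 0 else 1

/-- Implementation of one step of `suffixLevenshtein` (as in Mathlib of December 2024). -/
def impl {α β δ : Type*} [AddZeroClass δ] [Min δ] (C : Cost α β δ)
    (xs : List α) (y : β) (d : {r : List δ // 0 < r.length}) : {r : List δ // 0 < r.length} :=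
  let ⟨ds, w⟩ := d
  xs.zip (ds.zip ds.tail) |>.foldr
    (init := ⟨[C.insert y + ds.getLast (List.length_pos_iff.mp w)], by simp⟩)
    (fun ⟨x, d₀, d₁⟩ ⟨r, w⟩ =>
      ⟨min (C.delete x + r[0]) (min (C.insert y + d₀) (C.substitute x y + d₁)) :: r, by simp⟩)

end Levenshtein

/-- The Levenshtein distances from each suffix of `xs` to `ys`
(as in Mathlib of December 2024). -/
def suffixLevenshtein {α β δ : Type*} [AddZeroClass δ] [Min δ] (C : Levenshtein.Cost α β δ)
    (xs : List α) (ys : List β) : {r : List δ // 0 < r.length} :=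
  ys.foldr
    (Levenshtein.impl C xs)
    (xs.foldr (init := ⟨[0], by simp⟩) (fun a ⟨r, w⟩ => ⟨(C.delete a + r[0]) :: r, by simp⟩))

/-- The Levenshtein distance from `xs` to `ys` with cost structure `C`
(as in Mathlib of December 2024). -/
def levenshtein {α β δ : Type*} [AddZeroClass δ] [Min δ] (C : Levenshtein.Cost α β δ)
    (xs : List α) (ys : List β) : δ :=
  let ⟨r, w⟩ := suffixLevenshtein C xs ys
  r[0]

/-- Levenshtein edit distance between two words. -/
def ed {α : Type*} [DecidableEq α] (w₁ w₂ : List α) : ℕ :=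
  levenshtein Levenshtein.defaultCost w₁ w₂

/-- Edit distance from a word to a language, valued in `ℕ∞`. -/
noncomputable def edWordLang {α : Type*} [DecidableEq α] (w : List α) (L : Language α) : ℕ∞ :=
  ⨅ w' ∈ L, (ed w w' : ℕ∞)

/-- Edit distance from language `L₁` to language `L₂`, valued in `ℕ∞`. -/
noncomputable def edLang {α : Type*} [DecidableEq α] (L₁ L₂ : Language α) : ℕ∞ :=
  ⨆ w ∈ L₁, edWordLang w L₂

/-- `u ^ ℓ` : concatenation of `ℓ` copies of `u`. -/
def wpow {α : Type*} (u : List α) (ℓ : ℕ) : List α := (List.replicate ℓ u).flatten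

/-- The interleaved concatenation `s₁u₁s₂u₂⋯s_k u_k s_{k+1}` where
`ss = [s₁, …, s_{k+1}]` and `us = [u₁, …, u_k]`. -/
def weave {α : Type*} (ss us : List (List α)) : List α :=
  (List.zipWith (· ++ ·) ss us).flatten ++ (ss.drop us.length).flatten

/-- Context-free grammar over the alphabet `T`, with nonterminals in an arbitrary universe
(`ContextFreeGrammar` as in Mathlib of December 2024; the present one has `NT : Type`). -/
structure PolyContextFreeGrammar.{uN, uT} (T : Type uT) where
  /-- Type of nonterminals. -/
  NT : Type uN
  /-- Initial nonterminal. -/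
  initial : NT
  /-- Rewrite rules. -/
  rules : Finset (ContextFreeRule T NT)

namespace PolyContextFreeGrammar

/-- One rewriting step by a rule from `g` sends `u` to `v`. -/
def Produces {T : Type*} (g : PolyContextFreeGrammar T) (u v : List (Symbol T g.NT)) : Prop :=
  ∃ r ∈ g.rules, r.Rewrites u v

/-- `g` can transform `u` to `v` in some number of rewriting steps. -/
abbrev Derives {T : Type*} (g : PolyContextFreeGrammar T) :
    List (Symbol T g.NT) → List (Symbol T g.NT) → Prop :=
  Relation.ReflTransGen g.Produces

/-- `g` can transform its initial nonterminal to `s` in some number of rewriting steps. -/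
def Generates {T : Type*} (g : PolyContextFreeGrammar T) (s : List (Symbol T g.NT)) : Prop :=
  g.Derives [Symbol.nonterminal g.initial] s

/-- The language (set of words) that can be generated by a given context-free grammar `g`. -/
def language {T : Type*} (g : PolyContextFreeGrammar T) : Language T :=
  { w : List T | g.Generates (w.map Symbol.terminal) }

end PolyContextFreeGrammar

/-- A context-free grammar is in Chomsky normal form. -/
def ContextFreeGrammar.IsCNF {α : Type*} (G : PolyContextFreeGrammar α) : Prop :=
  ∀ r ∈ G.rules,
    (∃ z u : G.NT, r.output = [Symbol.nonterminal z, Symbol.nonterminal u]) ∨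
    (∃ a : α, r.output = [Symbol.terminal a]) ∨
    (r.input = G.initial ∧ r.output = [])

/-- Compact `G`-decomposition of the word `w`. -/
def IsCompactDecomp {α : Type*} (G : PolyContextFreeGrammar α) [Fintype G.NT]
    (w : List α) (ss us : List (List α)) : Prop :=
  ss.length = us.length + 1 ∧ w = weave ss us ∧
  (∀ ℓ : ℕ, weave ss (us.map (fun u => wpow u ℓ)) ∈ G.language) ∧
  (ss.map List.length).sum ≤ 2 ^ Fintype.card G.NT ∧
  us.length ≤ 2 ^ (Fintype.card G.NT + 1) - 2

/-- The reachability set `R(u, S')`: states reachable (by any word) from the set of states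
reachable from `S'` upon reading `u`. -/
def reachSet {α σ : Type*} (M : NFA α σ) (u : List α) (S' : Set σ) : Set σ :=
  { q | ∃ v : List α, q ∈ M.evalFrom (M.evalFrom S' u) v }

/-- Prefix closure of a language. -/
def prefLang {α : Type*} (L : Language α) : Language α := { u | ∃ v, u ++ v ∈ L }

/-!
Fix a derivation tree of `w` with root `A` whose inner labels lie in a set `S` of nonterminals, and
choose an occurrence of `A` below which `A` does not occur again. The path from the root to it shows
`A ⇒* x A y`, and `x`, `y` become two pumped factors. The chosen occurrence is rewritten by a rule
with at most `d` symbols on its right-hand side, each of which derives its part of the word with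
labels in `S \ {A}`. By induction on `|S|` a tree therefore leaves at most `d ^ |S|` letters
unpumped, and the number `k` of pumped factors obeys `k (n + 1) = d * k n + 2`, that is
`k n = 2 * ∑ i < n, d ^ i`.
-/

section Words

variable {α : Type*}

theorem wpow_one (u : List α) : wpow u 1 = u := by
  simp [wpow]

theorem wpow_succ (u : List α) (ℓ : ℕ) : wpow u (ℓ + 1) = wpow u ℓ ++ u := by
  simp [wpow, List.replicate_succ']

theorem wpow_succ' (u : List α) (ℓ : ℕ) : wpow u (ℓ + 1) = u ++ wpow u ℓ := by
  simp [wpow, List.replicate_succ]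

theorem weave_cons_cons (s u : List α) (ss us : List (List α)) :
    weave (s :: ss) (u :: us) = s ++ u ++ weave ss us := by
  simp [weave]

theorem weave_cons_head (a : α) (s : List α) (ss us : List (List α)) :
    weave ((a :: s) :: ss) us = a :: weave (s :: ss) us := by
  cases us <;> simp [weave]

end Words

/-- A word in which some factors are marked for pumping: `Sum.inl a` is a fixed letter and
`Sum.inr u` a pumped factor. Unlike the pairs `ss, us` of `weave`, these are closed under `++`. -/
abbrev PumpPattern (α : Type*) := List (α ⊕ List α)

namespace PumpPattern

variable {α : Type*}

/-- The word obtained from a pattern by repeating each pumped factor `ℓ` times. -/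
def expand (t : PumpPattern α) (ℓ : ℕ) : List α :=
  t.flatMap (Sum.elim (fun a => [a]) (fun u => wpow u ℓ))

/-- The number of fixed letters of a pattern: the total length of the words `s_i`. -/
def letterCount (t : PumpPattern α) : ℕ := t.countP Sum.isLeft

/-- The number of pumped factors of a pattern: the `k` of a decomposition. -/
def pumpCount (t : PumpPattern α) : ℕ := t.countP Sum.isRight

theorem exists_weave_eq_expand (t : PumpPattern α) : ∃ ss us : List (List α),
    ss.length = us.length + 1 ∧ (∀ ℓ, weave ss (us.map (fun u => wpow u ℓ)) = t.expand ℓ) ∧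
    (ss.map List.length).sum = t.letterCount ∧ us.length = t.pumpCount := by
  induction t with
  | nil => exact ⟨[[]], [], rfl, fun _ => rfl, rfl, rfl⟩
  | cons item t ih =>
    obtain ⟨ss, us, hlen, hweave, hletters, hpumps⟩ := ih
    cases item with
    | inl a =>
      obtain ⟨s, ss, rfl⟩ := List.exists_cons_of_length_eq_add_one hlen
      refine ⟨(a :: s) :: ss, us, hlen, fun ℓ => ?_, ?_, hpumps⟩
      · rw [weave_cons_head, hweave]
        rfl
      · simp only [letterCount, List.map_cons, List.sum_cons, List.length_cons, List.countP_cons,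
          Sum.isLeft_inl, if_true] at hletters ⊢
        omega
    | inr u =>
      refine ⟨[] :: ss, u :: us, by simp [hlen], fun ℓ => ?_, ?_, ?_⟩
      · rw [List.map_cons, weave_cons_cons, hweave]
        rfl
      · simpa [letterCount, List.countP_cons] using hletters
      · simpa [pumpCount, List.countP_cons] using hpumps

end PumpPattern

namespace PolyContextFreeGrammar

variable {α : Type*} {G : PolyContextFreeGrammar α} {S : Finset G.NT}
  {xs ys zs us vs : List (Symbol α G.NT)} {A : G.NT} {r : ContextFreeRule α G.NT}
  {u v w x y : List α} {m n k l d : ℕ}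

theorem Derives.append (hx : G.Derives xs us) (hy : G.Derives ys vs) :
    G.Derives (xs ++ ys) (us ++ vs) := by
  have left : G.Derives (xs ++ ys) (us ++ ys) :=
    hx.lift (· ++ ys) fun _ _ ⟨r, hr, h⟩ => ⟨r, hr, h.append_right ys⟩
  have right : G.Derives (us ++ ys) (us ++ vs) :=
    hy.lift (us ++ ·) fun _ _ ⟨r, hr, h⟩ => ⟨r, hr, h.append_left us⟩
  exact left.trans right

theorem derives_output_of_mem_rules (hr : r ∈ G.rules) :
    G.Derives [.nonterminal r.input] r.output :=
  .single ⟨r, hr, by simpa using r.rewrites_of_exists_parts [] []⟩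

theorem Derives.nonterminal_cons (hr : r ∈ G.rules) (hout : G.Derives r.output us)
    (hxs : G.Derives xs vs) : G.Derives (.nonterminal r.input :: xs) (us ++ vs) :=
  Derives.append ((derives_output_of_mem_rules hr).trans hout) hxs

theorem Derives.terminal_cons (a : α) (h : G.Derives xs us) :
    G.Derives (.terminal a :: xs) (.terminal a :: us) :=
  Derives.append (xs := [.terminal a]) .refl h

theorem Derives.substitute (h : G.Derives xs (us ++ ys ++ vs)) (hys : G.Derives ys zs) :
    G.Derives xs (us ++ zs ++ vs) :=
  h.trans (Derives.append (Derives.append .refl hys) .refl)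

theorem Derives.iterate_context (h : G.Derives xs (x.map .terminal ++ xs ++ y.map .terminal))
    (ℓ : ℕ) : G.Derives xs ((wpow x ℓ).map .terminal ++ xs ++ (wpow y ℓ).map .terminal) := by
  induction ℓ with
  | zero => simpa [wpow] using Relation.ReflTransGen.refl
  | succ ℓ ih => simpa [wpow_succ x, wpow_succ' y] using ih.substitute h

/-- `G.DerivesWithin S xs w`: the sentential form `xs` derives the word `w` by derivation trees
all of whose inner nodes carry labels in `S`. The trees are encoded by their forests, read from
left to right. -/
inductive DerivesWithin (G : PolyContextFreeGrammar α) (S : Finset G.NT) :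
    List (Symbol α G.NT) → List α → Prop
  | nil : DerivesWithin G S [] []
  | terminal (a : α) {xs : List (Symbol α G.NT)} {w : List α} (hxs : DerivesWithin G S xs w) :
      DerivesWithin G S (.terminal a :: xs) (a :: w)
  | nonterminal {r : ContextFreeRule α G.NT} {xs : List (Symbol α G.NT)} {u v : List α}
      (hr : r ∈ G.rules) (hS : r.input ∈ S) (hout : DerivesWithin G S r.output u)
      (hxs : DerivesWithin G S xs v) :
      DerivesWithin G S (.nonterminal r.input :: xs) (u ++ v)

namespace DerivesWithin

theorem derives (h : G.DerivesWithin S xs w) : G.Derives xs (w.map .terminal) := by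
  induction h with
  | nil => exact .refl
  | terminal a _ ih => exact ih.terminal_cons a
  | nonterminal hr _ _ _ ihout ihxs =>
    rw [List.map_append]
    exact ihout.nonterminal_cons hr ihxs

theorem map_terminal (S : Finset G.NT) (w : List α) :
    G.DerivesWithin S (w.map .terminal) w := by
  induction w with
  | nil => exact .nil
  | cons a w ih => exact .terminal a ih

theorem exists_of_append (h : G.DerivesWithin S (xs ++ ys) w) :
    ∃ u v, w = u ++ v ∧ G.DerivesWithin S xs u ∧ G.DerivesWithin S ys v := by
  induction xs generalizing w with
  | nil => exact ⟨[], w, rfl, .nil, h⟩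
  | cons _ xs ih =>
    cases h with
    | terminal a hxs =>
      obtain ⟨u, v, rfl, hu, hv⟩ := ih hxs
      exact ⟨a :: u, v, rfl, .terminal a hu, hv⟩
    | @nonterminal _ _ u₀ _ hr hS hout hxs =>
      obtain ⟨u, v, rfl, hu, hv⟩ := ih hxs
      exact ⟨u₀ ++ u, v, (List.append_assoc ..).symm, .nonterminal hr hS hout hu, hv⟩

theorem of_rewrites (hr : r ∈ G.rules) (hS : r.input ∈ S) (hrw : r.Rewrites xs ys)
    (h : G.DerivesWithin S ys w) : G.DerivesWithin S xs w := by
  induction hrw generalizing w with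
  | head =>
    obtain ⟨u, v, rfl, hout, hrest⟩ := h.exists_of_append
    exact .nonterminal hr hS hout hrest
  | cons _ _ ih =>
    cases h with
    | terminal a hxs => exact .terminal a (ih hxs)
    | nonterminal hr' hS' hout hxs => exact .nonterminal hr' hS' hout (ih hxs)

theorem of_derives (hS : ∀ r ∈ G.rules, r.input ∈ S) (h : G.Derives xs (w.map .terminal)) :
    G.DerivesWithin S xs w := by
  induction h using Relation.ReflTransGen.head_induction_on with
  | refl => exact map_terminal S w
  | head hstep _ ih =>
    obtain ⟨r, hr, hrw⟩ := hstep
    exact ih.of_rewrites hr (hS r hr) hrw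

theorem erase_or_exists_innermost [DecidableEq G.NT] (A : G.NT) (h : G.DerivesWithin S xs w) :
    G.DerivesWithin (S.erase A) xs w ∨
    ∃ x u y, w = x ++ u ++ y ∧
      G.Derives xs (x.map .terminal ++ [.nonterminal A] ++ y.map .terminal) ∧
      ∃ r ∈ G.rules, r.input = A ∧ G.DerivesWithin (S.erase A) r.output u := by
  induction h with
  | nil => exact .inl .nil
  | terminal a _ ih =>
    obtain ih | ⟨x, u, y, rfl, hctx, hinner⟩ := ih
    · exact .inl (.terminal a ih)
    · exact .inr ⟨a :: x, u, y, rfl, hctx.terminal_cons a, hinner⟩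
  | @nonterminal r xs u v hr hS hout hxs ihout ihxs =>
    obtain ihout | ⟨x, u, y, rfl, hctx, hinner⟩ := ihout
    · obtain ihxs | ⟨x, v, y, rfl, hctx, hinner⟩ := ihxs
      · obtain rfl | hne := eq_or_ne r.input A
        · have hctx : G.Derives (.nonterminal r.input :: xs)
              (.nonterminal r.input :: v.map .terminal) :=
            Derives.append (xs := [.nonterminal r.input]) .refl hxs.derives
          exact .inr ⟨[], u, v, rfl, hctx, r, hr, rfl, ihout⟩
        · exact .inl (.nonterminal hr (Finset.mem_erase.2 ⟨hne, hS⟩) ihout ihxs)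
      · refine .inr ⟨u ++ x, v, y, by simp, ?_, hinner⟩
        simpa using hout.derives.nonterminal_cons hr hctx
    · refine .inr ⟨x, u, y ++ v, by simp, ?_, hinner⟩
      simpa using hctx.nonterminal_cons hr hxs.derives

theorem exists_innermost [DecidableEq G.NT] (h : G.DerivesWithin S [.nonterminal A] w) :
    A ∈ S ∧ ∃ x u y, w = x ++ u ++ y ∧
      G.Derives [.nonterminal A] (x.map .terminal ++ [.nonterminal A] ++ y.map .terminal) ∧
      ∃ r ∈ G.rules, r.input = A ∧ G.DerivesWithin (S.erase A) r.output u := by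
  have root_mem {S : Finset G.NT} (h : G.DerivesWithin S [.nonterminal A] w) : A ∈ S := by
    cases h
    assumption
  exact ⟨root_mem h, (h.erase_or_exists_innermost A).resolve_left fun h' =>
    Finset.notMem_erase A S (root_mem h')⟩

end DerivesWithin

/-- `G.HasPumpPattern xs w m k`: the word `w` is the first expansion of a pattern with at most `m`
fixed letters and at most `k` pumped factors, all of whose expansions are derivable from `xs`. -/
def HasPumpPattern (G : PolyContextFreeGrammar α) (xs : List (Symbol α G.NT)) (w : List α)
    (m k : ℕ) : Prop :=
  ∃ t : PumpPattern α, t.expand 1 = w ∧ (∀ ℓ, G.Derives xs ((t.expand ℓ).map .terminal)) ∧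
    t.letterCount ≤ m ∧ t.pumpCount ≤ k

namespace HasPumpPattern

theorem nil : G.HasPumpPattern [] [] 0 0 :=
  ⟨[], rfl, fun _ => .refl, le_rfl, le_rfl⟩

theorem singleton_terminal (a : α) : G.HasPumpPattern [.terminal a] [a] 1 0 :=
  ⟨[.inl a], rfl, fun _ => .refl, le_rfl, le_rfl⟩

theorem mono (h : G.HasPumpPattern xs w m k) (hm : m ≤ n) (hk : k ≤ l) :
    G.HasPumpPattern xs w n l :=
  let ⟨t, hone, hder, hletters, hpumps⟩ := h
  ⟨t, hone, hder, hletters.trans hm, hpumps.trans hk⟩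

theorem append (hx : G.HasPumpPattern xs u m k) (hy : G.HasPumpPattern ys v n l) :
    G.HasPumpPattern (xs ++ ys) (u ++ v) (m + n) (k + l) := by
  obtain ⟨t, rfl, hder, hletters, hpumps⟩ := hx
  obtain ⟨t', rfl, hder', hletters', hpumps'⟩ := hy
  refine ⟨t ++ t', List.flatMap_append, fun ℓ => ?_, ?_, ?_⟩
  · simpa [PumpPattern.expand] using (hder ℓ).append (hder' ℓ)
  · exact List.countP_append.trans_le (add_le_add hletters hletters')
  · exact List.countP_append.trans_le (add_le_add hpumps hpumps')

theorem of_mem_rules (hr : r ∈ G.rules) (h : G.HasPumpPattern r.output w m k) :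
    G.HasPumpPattern [.nonterminal r.input] w m k :=
  let ⟨t, hone, hder, hcounts⟩ := h
  ⟨t, hone, fun ℓ => (derives_output_of_mem_rules hr).trans (hder ℓ), hcounts⟩

theorem pump (h : G.HasPumpPattern xs w m k)
    (hctx : G.Derives xs (x.map .terminal ++ xs ++ y.map .terminal)) :
    G.HasPumpPattern xs (x ++ w ++ y) m (k + 2) := by
  obtain ⟨t, rfl, hder, hletters, hpumps⟩ := h
  refine ⟨.inr x :: t ++ [.inr y], ?_, fun ℓ => ?_, ?_, ?_⟩
  · simp [PumpPattern.expand, wpow_one]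
  · simpa [PumpPattern.expand] using (hctx.iterate_context ℓ).substitute (hder ℓ)
  · simpa [PumpPattern.letterCount] using hletters
  · simpa [PumpPattern.pumpCount, List.countP_cons] using hpumps

end HasPumpPattern

namespace DerivesWithin

theorem hasPumpPattern_of_forall_nonterminal (hm : 0 < m)
    (hnt : ∀ A u, G.DerivesWithin S [.nonterminal A] u → G.HasPumpPattern [.nonterminal A] u m k)
    (h : G.DerivesWithin S xs w) : G.HasPumpPattern xs w (xs.length * m) (xs.length * k) := by
  induction h with
  | nil => simpa using HasPumpPattern.nil
  | terminal a _ ih =>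
    refine ((HasPumpPattern.singleton_terminal a).append ih).mono ?_ ?_ <;>
      simp only [List.length_cons, add_one_mul] <;> omega
  | @nonterminal r _ u _ hr hS hout _ _ ih =>
    have htree : G.DerivesWithin S [.nonterminal r.input] u := by
      simpa using DerivesWithin.nonterminal hr hS hout .nil
    refine ((hnt _ _ htree).append ih).mono ?_ ?_ <;>
      simp only [List.length_cons, add_one_mul] <;> omega

theorem hasPumpPattern_nonterminal (hpos : 0 < d) (hd : ∀ r ∈ G.rules, r.output.length ≤ d)
    (h : G.DerivesWithin S [.nonterminal A] w) :
    G.HasPumpPattern [.nonterminal A] w (d ^ S.card)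
      (2 * ∑ i ∈ Finset.range S.card, d ^ i) := by
  classical
  induction hn : S.card generalizing S A w with
  | zero => exact absurd h.exists_innermost.1 (by simp [Finset.card_eq_zero.1 hn])
  | succ n ih =>
    obtain ⟨hA, x, u, y, rfl, hctx, r, hr, rfl, hout⟩ := h.exists_innermost
    have hcard : (S.erase r.input).card = n := by rw [Finset.card_erase_of_mem hA, hn]; rfl
    have hinner : G.HasPumpPattern r.output u (r.output.length * d ^ n)
        (r.output.length * (2 * ∑ i ∈ Finset.range n, d ^ i)) :=
      hout.hasPumpPattern_of_forall_nonterminal (pow_pos hpos n) fun _ _ htree => ih htree hcard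
    refine ((HasPumpPattern.of_mem_rules hr hinner).pump hctx).mono ?_ ?_
    · calc r.output.length * d ^ n ≤ d * d ^ n := Nat.mul_le_mul_right _ (hd r hr)
        _ = d ^ (n + 1) := (pow_succ' d n).symm
    · calc r.output.length * (2 * ∑ i ∈ Finset.range n, d ^ i) + 2
          ≤ d * (2 * ∑ i ∈ Finset.range n, d ^ i) + 2 := by gcongr; exact hd r hr
        _ = 2 * ∑ i ∈ Finset.range (n + 1), d ^ i := by rw [geom_sum_succ]; ring

end DerivesWithin

theorem output_length_le_two_of_isCNF (hG : ContextFreeGrammar.IsCNF G) :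
    ∀ r ∈ G.rules, r.output.length ≤ 2 := by
  intro r hr
  obtain ⟨_, _, h⟩ | ⟨_, h⟩ | ⟨_, h⟩ := hG r hr <;> simp [h]

end PolyContextFreeGrammar

theorem two_mul_sum_range_two_pow (n : ℕ) :
    2 * ∑ i ∈ Finset.range n, 2 ^ i = 2 ^ (n + 1) - 2 := by
  rw [Nat.geomSum_eq le_rfl, pow_succ']
  omega

theorem compact_decomposition_exists_general {α : Type*} (G : PolyContextFreeGrammar α)
    {d : ℕ} (hpos : 0 < d) (hd : ∀ r ∈ G.rules, r.output.length ≤ d)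
    {S : Finset G.NT} (hS : ∀ r ∈ G.rules, r.input ∈ S) {w : List α} (hw : w ∈ G.language) :
    ∃ ss us : List (List α), ss.length = us.length + 1 ∧ w = weave ss us ∧
      (∀ ℓ : ℕ, weave ss (us.map (fun u => wpow u ℓ)) ∈ G.language) ∧
      (ss.map List.length).sum ≤ d ^ S.card ∧
      us.length ≤ 2 * ∑ i ∈ Finset.range S.card, d ^ i := by
  have htree : G.DerivesWithin S [.nonterminal G.initial] w := .of_derives hS hw
  obtain ⟨t, hone, hder, hletters, hpumps⟩ := htree.hasPumpPattern_nonterminal hpos hd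
  obtain ⟨ss, us, hlen, hweave, hss, hus⟩ := t.exists_weave_eq_expand
  refine ⟨ss, us, hlen, ?_, fun ℓ => ?_, hss.trans_le hletters, hus.trans_le hpumps⟩
  · simpa [wpow_one, hone] using (hweave 1).symm
  · rw [hweave]
    exact hder ℓ

/-- Every word in the language of a CNF grammar admits a compact
`G`-decomposition. -/
theorem compact_decomposition_exists {α : Type*} (G : PolyContextFreeGrammar α) [Fintype G.NT]
    (hG : ContextFreeGrammar.IsCNF G) (w : List α) (hw : w ∈ G.language) :
    ∃ ss us : List (List α), IsCompactDecomp G w ss us := by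
  simpa only [two_mul_sum_range_two_pow] using! compact_decomposition_exists_general G two_pos
    (PolyContextFreeGrammar.output_length_le_two_of_isCNF hG) (fun _ _ => Finset.mem_univ _) hw
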